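/- Programs are finite binary words; $|p|$ is the length of $p\in\{0,1\}^*$. For a partial recursive $V:\{0,1\}^*\rightharpoonup\mathbb N$ put $K_V(n)=\min\{|p| : V(p)=n\}$, with $\min\emptyset=\infty$. Call $V$ optimal if for every partial recursive $W:\{0,1\}^*\rightharpoonup\mathbb N$ there is a constant $c$ with $K_V(n)\le K_W(n)+c$ for all $n$. Let $K=K_{U_0}$ for an optimal $U_0$ (plain Kolmogorov complexity). Let $\varphi_e$ be the partial recursive function $\mathbb N\rightharpoonup\mathbb N$ with Gödel number $e$, and let $PR$ be the set of all these functions. An effective operation is a map $F:PR\to PR$ for which there is a total recursive $f:\mathbb N\to\mathbb N$ with $F(\varphi_e)=\varphi_{f(e)}$ for all $e$; $\mathrm{Eff}$ is the set of effective operations. A map $G:\{0,1\}^*\to\mathrm{Eff}$ is effectively given if there is a total recursive $h$ with $G(p)(\varphi_e)=\varphi_{h(p,e)}$ for all $p,e$. A strongly universal enumeration of $\mathrm{Eff}$ is an effectively given $U:\{0,1\}^*\to\mathrm{Eff}$ for which there is a total recursive $\mathrm{comp}:\{0,1\}^*\times\{0,1\}^*\to\{0,1\}^*$ such that the maps $p\mapsto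 U(\mathrm{comp}(e,p))$, $e\in\{0,1\}^*$, are exactly the effectively given maps $\{0,1\}^*\to\mathrm{Eff}$, and for each $e$ there is a constant $c(e)$ with $|\mathrm{comp}(e,p)|\le|p|+c(e)$ for all $p$. For $n\in\mathbb N$ the iterator $It_n:PR\to PR$ is given by $It_0(f)=f$ and $It_{n+1}(f)=It_n(f)\circ f$. For $n\ge 1$ the negative iterator $It_{-n}$ acts on programs: for a program of $f$, $It_{-n}(f)$ has domain $\mathrm{Range}(It_n(f))$, and $It_{-n}(f)(x)$ is the $y$ such that $It_n(f)(y)$ is the first computation found to halt with value $x$ when the computations $It_n(f)(0),It_n(f)(1),\dots$ are dovetailed; an effective operation equals $It_{-n}$ if it agrees with this on every program of every $f\in PR$. For a strongly universal enumeration $U$ and $m\in\mathbb Z$ put $K^{\mathbb Z}_{Church}(m)=\min\{|p| : U(p)=It_m\}$, again with $\min\emptyset=\infty$. Then for every strongly universal enumeration $U$ of $\mathrm{Eff}$ and every optimal $U_0$, the values $K^{\mathbb Z}_{Church}(n)$ and $K(n)$ are finite for all $n\in\mathbb N$, and $K^{\mathbb Z}_{Church}\!\upharpoonright\!\mathbb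 N=_{\rm ct}K$: there is a constant $c$ with $$|K^{\mathbb Z}_{Church}(n)-K(n)|\le c\quad\text{for all } n\in\mathbb N.$$ -/

import Mathlib

open Nat.Partrec (Code)

/-- Programs: finite binary words. -/
abbrev Word : Type := List Bool

/-- `f ≤ct g`: there is a constant `c` with `f(n) ≤ g(n) + c` for all `n`
(values in `ℕ ∪ {∞}`, since `K_W(n) = ∞` when `n` is not in the range of `W`). -/
def LeCt (f g : ℕ → ℕ∞) : Prop := ∃ c : ℕ, ∀ n : ℕ, f n ≤ g n + c

/-- `f =ct g`: both `f` and `g` take only finite values, and there is a constant `c` with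
`|f(n) − g(n)| ≤ c` for all `n`. -/
def EqCt (f g : ℕ → ℕ∞) : Prop :=
  ∃ c : ℕ, ∀ n : ℕ, ∃ a b : ℕ, f n = a ∧ g n = b ∧ |(a : ℤ) - (b : ℤ)| ≤ c

/-- `K_V(n) = min{|p| : V(p) = n}`, with `min ∅ = ∞`. -/
noncomputable def KOf (V : Word →. ℕ) (n : ℕ) : ℕ∞ :=
  ⨅ (p : Word) (_ : n ∈ V p), (p.length : ℕ∞)

/-- `V` is an optimal partial recursive function `{0,1}* ⇀ ℕ`. -/
def OptimalPlain (V : Word →. ℕ) : Prop :=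
  Partrec V ∧ ∀ W : Word →. ℕ, Partrec W → LeCt (KOf V) (KOf W)

/-- The set `PR(ℕ→ℕ)` of partial recursive functions `ℕ ⇀ ℕ`. -/
def PRFun : Type := {f : ℕ →. ℕ // Nat.Partrec f}

/-- `φ_e`, the partial recursive function `ℕ ⇀ ℕ` with Gödel number `e`. -/
def phi (e : ℕ) : PRFun :=
  ⟨(Denumerable.ofNat Code e).eval, Nat.Partrec.Code.exists_code.mpr ⟨_, rfl⟩⟩

/-- `F : PR(ℕ→ℕ) → PR(ℕ→ℕ)` is an effective operation: it is induced by a total recursive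
function on Gödel numbers (which is then automatically extensional). -/
def IsEffOp (F : PRFun → PRFun) : Prop :=
  ∃ f : ℕ → ℕ, Computable f ∧ ∀ e : ℕ, F (phi e) = phi (f e)

/-- `Eff`: the set of all effective operations `PR(ℕ→ℕ) → PR(ℕ→ℕ)`. -/
def Eff : Type := {F : PRFun → PRFun // IsEffOp F}

/-- Effectively given maps `G : {0,1}* → Eff`: the effective operation `G(p)` is induced by a
total recursive function on Gödel numbers, uniformly in `p`. -/
def EffGiven (G : Word → Eff) : Prop :=
  ∃ h : Word → ℕ → ℕ, Computable₂ h ∧ ∀ (p : Word) (e : ℕ), (G p).val (phi e) = phi (h p e)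

/-- `U : {0,1}* → Eff` is a strongly universal enumeration of the effective operations:
`U` is effectively given, and there is a total recursive `comp` such that the maps
`U_e : p ↦ U(comp(e,p))` enumerate exactly the effectively given maps `{0,1}* → Eff`, and
`|comp(e,p)| ≤ |p| + c(e)`. -/
def StronglyUniversalEff (U : Word → Eff) : Prop :=
  EffGiven U ∧
  ∃ comp : Word → Word → Word, Computable₂ comp ∧
    Set.range (fun (e : Word) (p : Word) => U (comp e p)) = {G : Word → Eff | EffGiven G} ∧
    ∀ e : Word, ∃ c : ℕ, ∀ p : Word, (comp e p).length ≤ p.length + c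

/-- Composition `g ∘ f` in `PR(ℕ→ℕ)`. -/
def compPR (g f : PRFun) : PRFun :=
  ⟨fun x => (f.val x).bind g.val, by
    exact Partrec.nat_iff.1
      ((Partrec.nat_iff.2 f.2).bind ((Partrec.nat_iff.2 g.2).comp Computable.snd))⟩

/-- The iterators `It_n`: `It_0(f) = f` and `It_{n+1}(f) = It_n(f) ∘ f`. -/
def It : ℕ → PRFun → PRFun
  | 0 => fun f => f
  | n + 1 => fun f => compPR (It n f) f

/-- The program computing `It_n(f)` obtained from a program `c` for `f`. -/
def itCode : ℕ → Code → Code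
  | 0, c => c
  | n + 1, c => Code.comp (itCode n c) c

/-- The negative iterator `It_{-n}` applied to a function given by a program `c`: on input `x`,
dovetail the computations of `It_n(f)` on `0, 1, 2, …` (at step `t = ⟨s, y⟩` run `It_n(f)(y)`
for `s` steps) and return the `y` of the first computation found to halt with value `x`. Which
computation halts first depends on the program `c` and not only on the function `f`, so this is
an operation on programs. -/
def negItCode (n : ℕ) (c : Code) : ℕ →. ℕ := fun x =>
  Nat.rfindOpt fun t =>
    if x ∈ Nat.Partrec.Code.evaln t.unpair.1 (itCode n c) t.unpair.2
    then some t.unpair.2 else none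

/-- `F = It_m`, for `m ∈ ℤ`. For `m < 0` this says that `F` is the operation induced by the
negative iterator on Gödel numbers. -/
def IsIt : ℤ → (PRFun → PRFun) → Prop
  | Int.ofNat n, F => F = It n
  | Int.negSucc n, F =>
      ∀ e : ℕ, (F (phi e)).val = negItCode (n + 1) (Denumerable.ofNat Code e)

/-- The ℤ-Church Kolmogorov complexity `K^ℤ_Church(m) = min{|p| : U(p) = It_m}`, with
`min ∅ = ∞`. -/
noncomputable def KChurchZ (U : Word → Eff) (m : ℤ) : ℕ∞ :=
  ⨅ (p : Word) (_ : IsIt m (U p).val), (p.length : ℕ∞)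

/-! A program for the iterator `It_n` amounts, up to a constant, to a program for `n`, because one
can pass effectively between `n` and Gödel-number transformers inducing `It_n`. From `n` one obtains
such a transformer by self-composition; conversely, `It_n` sends the successor function to
`x ↦ x + n + 1`, whose value at `0` reveals `n`. Optimality on either side absorbs the cost of the
translation. The same argument applies to every sequence of effective operations with these two
properties. -/

section LeCt

variable {f g h : ℕ → ℕ∞}

theorem LeCt.of_le (hfg : f ≤ g) : LeCt f g :=
  ⟨0, fun n => (hfg n).trans le_self_add⟩

theorem LeCt.trans (hfg : LeCt f g) (hgh : LeCt g h) : LeCt f h := by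
  obtain ⟨c, hc⟩ := hfg
  obtain ⟨d, hd⟩ := hgh
  refine ⟨d + c, fun n => ?_⟩
  calc f n ≤ g n + c := hc n
    _ ≤ h n + d + c := by gcongr; exact hd n
    _ = h n + (d + c : ℕ) := by push_cast; exact add_assoc _ _ _

theorem LeCt.ne_top (hfg : LeCt f g) {n : ℕ} (hg : g n ≠ ⊤) : f n ≠ ⊤ := by
  obtain ⟨c, hc⟩ := hfg
  exact ne_top_of_le_ne_top (WithTop.add_ne_top.2 ⟨hg, ENat.natCast_ne_top c⟩) (hc n)

theorem EqCt.of_leCt (hfg : LeCt f g) (hgf : LeCt g f) (hg : ∀ n, g n ≠ ⊤) : EqCt f g := by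
  have hf (n : ℕ) : f n ≠ ⊤ := hfg.ne_top (hg n)
  obtain ⟨c, hc⟩ := hfg
  obtain ⟨d, hd⟩ := hgf
  refine ⟨max c d, fun n => ?_⟩
  obtain ⟨a, ha⟩ := ENat.ne_top_iff_exists.1 (hf n)
  obtain ⟨b, hb⟩ := ENat.ne_top_iff_exists.1 (hg n)
  have hab : a ≤ b + c := by exact_mod_cast ha ▸ hb ▸ hc n
  have hba : b ≤ a + d := by exact_mod_cast ha ▸ hb ▸ hd n
  exact ⟨a, b, ha.symm, hb.symm, abs_le.2 ⟨by omega, by omega⟩⟩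

end LeCt

theorem KOf_le_length {V : Word →. ℕ} {n : ℕ} {p : Word} (h : n ∈ V p) : KOf V n ≤ p.length :=
  iInf₂_le p h

theorem OptimalPlain.KOf_ne_top {V : Word →. ℕ} (hV : OptimalPlain V) (n : ℕ) : KOf V n ≠ ⊤ := by
  have const_ne_top : KOf (fun _ => Part.some n) n ≠ ⊤ :=
    ne_top_of_le_ne_top (ENat.natCast_ne_top _) (KOf_le_length (p := []) (Part.mem_some n))
  exact (hV.2 _ (Computable.const n)).ne_top const_ne_top

theorem phi_encode_val (c : Code) : (phi (Encodable.encode c)).val = c.eval := by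
  simp only [phi, Denumerable.ofNat_encode]

theorem phi_surjective : Function.Surjective phi := fun f => by
  obtain ⟨c, hc⟩ := Code.exists_code.1 f.2
  exact ⟨Encodable.encode c, Subtype.ext ((phi_encode_val c).trans hc)⟩

theorem partrec₂_phi : Partrec₂ fun e => (phi e).val :=
  Code.eval_part.comp ((Computable.ofNat Code).comp Computable.fst) Computable.snd

theorem phi_smn {α : Type*} [Primcodable α] {g : α → ℕ →. ℕ} (hg : Partrec₂ g) :
    ∃ h : α → ℕ, Computable h ∧ ∀ a, (phi (h a)).val = g a := by
  obtain ⟨c, hc⟩ := Code.exists_code.1 hg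
  refine ⟨fun a => Encodable.encode (c.curry (Encodable.encode a)), Computable.encode.comp
    (Code.primrec₂_curry.to_comp.comp (Computable.const c) Computable.encode), fun a => ?_⟩
  funext x
  rw [phi_encode_val, Code.eval_curry, hc, show Nat.pair (Encodable.encode a) x =
    Encodable.encode (a, x) from rfl]
  simp only [Encodable.encodek, Part.coe_some, Part.bind_some]
  exact Part.map_id' (fun _ => rfl) _

section Families

variable {α β : Type*}

/-- Reindexing of the family `F` along the partial function `V`: the operation with index `a` is
`F (V a)`, or the constant operation with value the empty function where `V a` diverges. -/
def reindexOp (F : β → PRFun → PRFun) (V : α →. β) (a : α) (f : PRFun) : PRFun :=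
  ⟨fun x => (V a).bind fun b => (F b f).val x, by
    obtain hV | ⟨b, hV⟩ := (V a).eq_none_or_eq_some
    · simpa only [hV, Part.bind_none] using Nat.Partrec.none
    · simpa only [hV, Part.bind_some] using (F b f).2⟩

theorem reindexOp_of_mem (F : β → PRFun → PRFun) {V : α →. β} {a : α} {b : β} (hb : b ∈ V a) :
    reindexOp F V a = F b := by
  funext f
  apply Subtype.ext
  funext x
  simp only [reindexOp, Part.eq_some_iff.2 hb, Part.bind_some]

variable [Primcodable α] [Primcodable β]

/-- A family of effective operations induced by Gödel-number transformers that are total recursive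
uniformly in the index; for `α = Word` these are the effectively given maps of `EffGiven`. -/
def UniformlyEffective (F : α → PRFun → PRFun) : Prop :=
  ∃ h : α → ℕ → ℕ, Computable₂ h ∧ ∀ a e, F a (phi e) = phi (h a e)

theorem UniformlyEffective.isEffOp {F : α → PRFun → PRFun} (hF : UniformlyEffective F) (a : α) :
    IsEffOp (F a) := by
  obtain ⟨h, h_computable, hFh⟩ := hF
  exact ⟨h a, h_computable.comp (Computable.const a) Computable.id, hFh a⟩

theorem uniformlyEffective_of_partrec₂ {F : α → PRFun → PRFun}
    (hF : Partrec₂ fun (q : α × ℕ) x => (F q.1 (phi q.2)).val x) : UniformlyEffective F := by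
  obtain ⟨h, h_computable, hFh⟩ := phi_smn hF
  exact ⟨fun a e => h (a, e), h_computable, fun a e => Subtype.ext (hFh (a, e)).symm⟩

theorem UniformlyEffective.reindexOp_of_partrec {F : β → PRFun → PRFun} (hF : UniformlyEffective F)
    {V : α →. β} (hV : Partrec V) : UniformlyEffective (reindexOp F V) := by
  obtain ⟨h, h_computable, hFh⟩ := hF
  apply uniformlyEffective_of_partrec₂
  simp only [reindexOp, hFh]
  exact (hV.comp (Computable.fst.comp Computable.fst)).bind
    (partrec₂_phi.comp
      (h_computable.comp Computable.snd
        (Computable.snd.comp (Computable.fst.comp Computable.fst)))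
      (Computable.snd.comp Computable.fst)).to₂

end Families

/-- The complexity `min{|p| : U(p) = F}` of an operation `F`, with `min ∅ = ∞`; at `F = It_n` it is
`K^ℤ_Church(n)`. -/
noncomputable def KOp (U : Word → Eff) (F : PRFun → PRFun) : ℕ∞ :=
  ⨅ (p : Word) (_ : (U p).val = F), (p.length : ℕ∞)

/-- An effectively given `U` is optimal if it describes effective operations at most a constant
less economically than any other; this is the analogue of `OptimalPlain` for `Eff`. -/
def OptimalEff (U : Word → Eff) : Prop :=
  EffGiven U ∧ ∀ G : Word → Eff, EffGiven G → ∃ c : ℕ, ∀ F, KOp U F ≤ KOp G F + c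

/-- A sequence of operations whose index `n` can be computed from any Gödel number of the value of
the `n`-th operation at a fixed partial recursive function. -/
def IndexRecoverable (F : ℕ → PRFun → PRFun) : Prop :=
  ∃ (f : PRFun) (D : ℕ →. ℕ), Partrec D ∧ ∀ n e, phi e = F n f → n ∈ D e

section Complexity

variable {U : Word → Eff} {F : ℕ → PRFun → PRFun}

theorem StronglyUniversalEff.optimalEff (hU : StronglyUniversalEff U) : OptimalEff U := by
  obtain ⟨hU_eff, comp, -, range_comp, length_comp⟩ := hU
  refine ⟨hU_eff, fun G hG => ?_⟩
  obtain ⟨e, rfl⟩ : G ∈ Set.range fun e p => U (comp e p) := range_comp ▸ hG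
  obtain ⟨c, hc⟩ := length_comp e
  refine ⟨c, fun F => ?_⟩
  simp only [KOp, ENat.iInf_add]
  exact le_iInf₂ fun p hp => (iInf₂_le (comp e p) hp).trans (mod_cast hc p)

theorem OptimalEff.leCt_KOf (hU : OptimalEff U) (hF : UniformlyEffective F) {V : Word →. ℕ}
    (hV : Partrec V) : LeCt (fun n => KOp U (F n)) (KOf V) := by
  have hG := hF.reindexOp_of_partrec hV
  let G : Word → Eff := fun p => ⟨reindexOp F V p, hG.isEffOp p⟩
  have KOp_G_le (n : ℕ) : KOp G (F n) ≤ KOf V n :=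
    le_iInf₂ fun p hp => iInf₂_le p (reindexOp_of_mem F hp)
  obtain ⟨c, hc⟩ := hU.2 G hG
  exact LeCt.trans ⟨c, fun n => hc (F n)⟩ (LeCt.of_le KOp_G_le)

theorem IndexRecoverable.exists_partrec_KOf_le_KOp (hF : IndexRecoverable F) (hU : EffGiven U) :
    ∃ W : Word →. ℕ, Partrec W ∧ ∀ n, KOf W n ≤ KOp U (F n) := by
  obtain ⟨f, D, hD, recovers⟩ := hF
  obtain ⟨h, h_computable, hUh⟩ := hU
  obtain ⟨e, rfl⟩ := phi_surjective f
  refine ⟨fun p => D (h p e),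
    hD.comp (h_computable.comp Computable.id (Computable.const e)), fun n => ?_⟩
  refine le_iInf₂ fun p hp => KOf_le_length (recovers n (h p e) ?_)
  rw [← hUh, hp]

theorem OptimalPlain.leCt_KOp {V : Word →. ℕ} (hV : OptimalPlain V) (hF : IndexRecoverable F)
    (hU : EffGiven U) : LeCt (KOf V) (fun n => KOp U (F n)) := by
  obtain ⟨W, hW, KOf_W_le⟩ := hF.exists_partrec_KOf_le_KOp hU
  exact (hV.2 W hW).trans (LeCt.of_le KOf_W_le)

end Complexity

section Iterators

theorem computable₂_itCode : Computable₂ itCode := by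
  have rec_computable : Computable fun q : ℕ × Code =>
      (Nat.rec q.2 (fun _ d => Code.comp d q.2) q.1 : Code) :=
    Computable.nat_rec Computable.fst Computable.snd
      (Code.primrec₂_comp.to_comp.comp (Computable.snd.comp Computable.snd)
        (Computable.snd.comp Computable.fst)).to₂
  refine rec_computable.of_eq fun ⟨n, c⟩ => ?_
  induction n with
  | zero => rfl
  | succ n ih => exact congrArg (Code.comp · c) ih

theorem eval_itCode (n e : ℕ) :
    (itCode n (Denumerable.ofNat Code e)).eval = (It n (phi e)).val := by
  induction n with
  | zero => rfl
  | succ n ih =>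
    funext x
    exact congrArg (((phi e).val x).bind ·) ih

theorem uniformlyEffective_It : UniformlyEffective It :=
  ⟨fun n e => Encodable.encode (itCode n (Denumerable.ofNat Code e)),
    Computable.encode.comp
      (computable₂_itCode.comp Computable.fst ((Computable.ofNat Code).comp Computable.snd)),
    fun n e => Subtype.ext ((phi_encode_val _).trans (eval_itCode n e)).symm⟩

theorem It_apply_of_total {f : PRFun} {s : ℕ → ℕ} (hf : ∀ x, f.val x = Part.some (s x))
    (n x : ℕ) : (It n f).val x = Part.some (s^[n + 1] x) := by
  induction n generalizing x with
  | zero => exact hf x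
  | succ n ih =>
    calc (It (n + 1) f).val x = (f.val x).bind (It n f).val := rfl
      _ = (Part.some (s x)).bind (It n f).val := congrArg (Part.bind · (It n f).val) (hf x)
      _ = (It n f).val (s x) := Part.bind_some _ _
      _ = Part.some (s^[n + 1 + 1] x) := ih (s x)

theorem indexRecoverable_It : IndexRecoverable It := by
  refine ⟨phi (Encodable.encode Code.succ), fun e => ((phi e).val 0).map Nat.pred,
    (partrec₂_phi.comp Computable.id (Computable.const 0)).map
      (Computable.pred.comp Computable.snd).to₂, fun n e he => ?_⟩
  have phi_succ (x : ℕ) : (phi (Encodable.encode Code.succ)).val x = Part.some x.succ := by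
    rw [phi_encode_val]
    rfl
  have value_at_zero : (phi e).val 0 = Part.some (n + 1) := by
    rw [he, It_apply_of_total phi_succ, Nat.succ_iterate, zero_add]
  exact (Part.mem_map_iff _).2 ⟨n + 1, value_at_zero ▸ Part.mem_some _, rfl⟩

end Iterators

theorem stmt12_general {U : Word → Eff} (hU : OptimalEff U) {U₀ : Word →. ℕ}
    (hU₀ : OptimalPlain U₀) {F : ℕ → PRFun → PRFun} (hF : UniformlyEffective F)
    (hF_rec : IndexRecoverable F) : EqCt (fun n => KOp U (F n)) (KOf U₀) :=
  EqCt.of_leCt (hU.leCt_KOf hF hU₀.1) (hU₀.leCt_KOp hF_rec hU.1) hU₀.KOf_ne_top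

/-- `K^ℤ_Church↾ℕ =ct K`. -/
theorem stmt12 (U : Word → Eff) (hU : StronglyUniversalEff U)
    (U₀ : Word →. ℕ) (hU₀ : OptimalPlain U₀) :
    EqCt (fun n : ℕ => KChurchZ U (n : ℤ)) (KOf U₀) :=
  stmt12_general hU.optimalEff hU₀ uniformlyEffective_It indexRecoverable_It
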